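/- Let Q be an infinite set of positive integers, n ≥ 1 an integer and τ > 1 + ν(Q)/n a real number. Then for every s > (n + ν(Q))/τ the s-dimensional Hausdorff measure of W*_{τ,n}(Q) ∩ [0,1]^n is zero; consequently the Hausdorff dimension of W*_{τ,n}(Q) is at most (n + ν(Q))/τ. -/

import Mathlib

/-!
Only the limsup part of `W*` matters.  A point `x` with `‖x‖ ≤ k` which is approximable by
infinitely many `p/q` with `q ∈ Q` lies, for every `N`, in one of the balls `B(p/q, q^{-τ})`
with `q ∈ Q`, `q ≥ N`, `|p_i| ≤ (k+1) q`.  For each `q` there are at most `((2k+3) q)^n` such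
balls, so the `s`-dimensional sum of this covering is bounded by a constant times the tail
`∑_{q ∈ Q, q ≥ N} q^{n - τ s}`.  Since `τ s - n > ν(Q)`, the series converges
(`summable_of_expConv_lt`), the tails tend to `0`, and the Hausdorff measure vanishes
(`hausdorffMeasure_bounded_approx_eq_zero`).  The dimension bound follows by exhausting `ℝⁿ`
by the balls `‖x‖ ≤ k`.
-/

open MeasureTheory Filter
open scoped ENNReal

/-- The exponent of convergence `ν(S)` of a set `S` of positive integers. -/
noncomputable def expConv (S : Set ℕ) : ℝ :=
  sInf {ν : ℝ | 0 < ν ∧ Summable (fun q : S => ((q : ℕ) : ℝ) ^ (-ν))}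

/-- The set of pairs `(p, q) ∈ ℤⁿ × Q` approximating `x ∈ ℝⁿ` at order `τ`,
i.e. with `|x - p/q| < q^{-τ}` in the supremum norm. -/
def approxPairs (n : ℕ) (τ : ℝ) (Q : Set ℕ) (x : Fin n → ℝ) : Set ((Fin n → ℤ) × ℕ) :=
  {pq | pq.2 ∈ Q ∧ ‖x - fun i => (pq.1 i : ℝ) / (pq.2 : ℝ)‖ < (pq.2 : ℝ) ^ (-τ)}

/-- The liminf set `W*_{τ,n}(Q)`: points of `ℝⁿ` which are `τ`-approximable by
infinitely many rationals with denominators in `Q`, but only finitely many with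
(positive) denominators outside `Q`. -/
def WStar (n : ℕ) (τ : ℝ) (Q : Set ℕ) : Set (Fin n → ℝ) :=
  {x | (approxPairs n τ Q x).Infinite ∧
    (approxPairs n τ ({q | 0 < q} \ Q) x).Finite}

lemma expConv_nonneg (Q : Set ℕ) : 0 ≤ expConv Q :=
  Real.sInf_nonneg fun _ h => h.1.le

/-- The Dirichlet series of `Q` converges strictly to the right of the exponent of convergence. -/
lemma summable_of_expConv_lt (Q : Set ℕ) (hQpos : ∀ q ∈ Q, 0 < q) {a : ℝ}
    (ha : expConv Q < a) : Summable (Q.indicator fun q : ℕ => (q : ℝ) ^ (-a)) := by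
  -- `ν = 2` shows that the infimum defining `expConv Q` is not over the empty set.
  have hne : {ν : ℝ | 0 < ν ∧ Summable (fun q : Q => ((q : ℕ) : ℝ) ^ (-ν))}.Nonempty :=
    ⟨2, by norm_num, (Real.summable_nat_rpow.2 (by norm_num : (-2 : ℝ) < -1)).subtype Q⟩
  obtain ⟨b, ⟨_, hb⟩, hba⟩ := exists_lt_of_csInf_lt hne ha
  rw [← summable_subtype_iff_indicator]
  refine Summable.of_nonneg_of_le (fun q => Real.rpow_nonneg (Nat.cast_nonneg _) _) (fun q => ?_) hb
  have h1 : (1 : ℝ) ≤ ((q : ℕ) : ℝ) := by exact_mod_cast hQpos q q.2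
  exact Real.rpow_le_rpow_of_exponent_le h1 (by linarith)

/-- The integer vectors `p` with `|p_i| ≤ (k+1) q`: the only possible numerators of good
approximations with denominator `q` to points of norm at most `k`. -/
noncomputable def numerators (n k q : ℕ) : Finset (Fin n → ℤ) :=
  Fintype.piFinset fun _ => Finset.Icc (-(((k + 1) * q : ℕ) : ℤ)) (((k + 1) * q : ℕ) : ℤ)

lemma card_numerators_le (n k : ℕ) {q : ℕ} (hq : 0 < q) :
    (numerators n k q).card ≤ ((2 * k + 3) * q) ^ n := by
  unfold numerators
  rw [Fintype.card_piFinset]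
  simp only [Int.card_Icc, Finset.prod_const, Finset.card_univ, Fintype.card_fin]
  refine Nat.pow_le_pow_left ?_ n
  have : (((k + 1) * q : ℕ) : ℤ) + 1 - -(((k + 1) * q : ℕ) : ℤ)
      = ((2 * ((k + 1) * q) + 1 : ℕ) : ℤ) := by push_cast; ring
  rw [this, Int.toNat_natCast]
  nlinarith

lemma mem_numerators {n k : ℕ} {τ : ℝ} (hτ : 0 < τ) {Q : Set ℕ} (hQpos : ∀ q ∈ Q, 0 < q)
    {x : Fin n → ℝ} (hx : ‖x‖ ≤ k) {pq : (Fin n → ℤ) × ℕ} (h : pq ∈ approxPairs n τ Q x) :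
    pq.1 ∈ numerators n k pq.2 := by
  obtain ⟨hq, hlt⟩ := h
  have hq0 : (1 : ℝ) ≤ (pq.2 : ℝ) := by exact_mod_cast hQpos _ hq
  have hle : (pq.2 : ℝ) ^ (-τ) ≤ 1 := Real.rpow_le_one_of_one_le_of_nonpos hq0 (by linarith)
  unfold numerators
  rw [Fintype.mem_piFinset]
  intro i
  have h1 := (norm_le_pi_norm _ i).trans (hlt.le.trans hle)
  have h2 := (norm_le_pi_norm x i).trans hx
  simp only [Pi.sub_apply, Real.norm_eq_abs] at h1 h2
  have h3 : |(pq.1 i : ℝ) / pq.2| ≤ k + 1 := by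
    rw [abs_le] at *
    constructor <;> linarith [h1.1, h1.2, h2.1, h2.2]
  rw [abs_div, abs_of_pos (by linarith : (0 : ℝ) < pq.2), div_le_iff₀ (by linarith),
    abs_le] at h3
  rw [Finset.mem_Icc]
  constructor
  · have := h3.1
    exact_mod_cast this
  · have := h3.2
    exact_mod_cast this

open Classical in
/-- The covering ball attached to `p/q`, taken to be empty for pairs `(p, q)` that are not needed
to cover points of norm at most `k`. -/
noncomputable def coverSet (n k : ℕ) (τ : ℝ) (Q : Set ℕ) (q : ℕ) (p : Fin n → ℤ) :
    Set (Fin n → ℝ) :=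
  if q ∈ Q ∧ p ∈ numerators n k q then
    Metric.closedBall (fun i => (p i : ℝ) / (q : ℝ)) ((q : ℝ) ^ (-τ)) else ∅

lemma ediam_coverSet_le (n k : ℕ) (τ : ℝ) (Q : Set ℕ) (q : ℕ) (p : Fin n → ℤ) :
    Metric.ediam (coverSet n k τ Q q p) ≤ ENNReal.ofReal (2 * (q : ℝ) ^ (-τ)) := by
  unfold coverSet
  split_ifs
  · refine Metric.ediam_le fun y hy z hz => ?_
    rw [edist_dist]
    refine ENNReal.ofReal_le_ofReal ?_
    have := dist_triangle_right y z (fun i => (p i : ℝ) / (q : ℝ))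
    rw [Metric.mem_closedBall] at hy hz
    linarith
  · simp

lemma tsum_ediam_coverSet_le (n k : ℕ) {τ s : ℝ} (hs : 0 < s) (Q : Set ℕ)
    (hQpos : ∀ q ∈ Q, 0 < q) (q : ℕ) :
    ∑' p, Metric.ediam (coverSet n k τ Q q p) ^ s ≤
      ENNReal.ofReal (((2 * k + 3) ^ n * 2 ^ s) *
        Q.indicator (fun q : ℕ => (q : ℝ) ^ (-(τ * s - n))) q) := by
  by_cases hq : q ∈ Q
  · have hq0 : (0 : ℝ) < q := by exact_mod_cast hQpos q hq
    rw [Set.indicator_of_mem hq, tsum_eq_sum (s := numerators n k q)]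
    · calc ∑ p ∈ numerators n k q, Metric.ediam (coverSet n k τ Q q p) ^ s
          ≤ ∑ p ∈ numerators n k q, ENNReal.ofReal ((2 * (q : ℝ) ^ (-τ)) ^ s) := by
            refine Finset.sum_le_sum fun p _ => ?_
            rw [← ENNReal.ofReal_rpow_of_nonneg (by positivity) hs.le]
            exact ENNReal.rpow_le_rpow (ediam_coverSet_le n k τ Q q p) hs.le
        _ = ENNReal.ofReal ((numerators n k q).card * (2 * (q : ℝ) ^ (-τ)) ^ s) := by
            rw [Finset.sum_const, nsmul_eq_mul, ENNReal.ofReal_mul (by positivity),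
              ENNReal.ofReal_natCast]
        _ ≤ _ := by
            refine ENNReal.ofReal_le_ofReal ?_
            have h1 : ((numerators n k q).card : ℝ) ≤ ((2 * k + 3) * q) ^ n := by
              exact_mod_cast card_numerators_le n k (hQpos q hq)
            refine (mul_le_mul_of_nonneg_right h1 (by positivity)).trans_eq ?_
            have h2 : (q : ℝ) ^ (-(τ * s - n)) = (q : ℝ) ^ n * (q : ℝ) ^ (-τ * s) := by
              rw [← Real.rpow_natCast, ← Real.rpow_add hq0]
              congr 1
              ring
            rw [h2, mul_pow, Real.mul_rpow (by norm_num) (by positivity), ← Real.rpow_mul hq0.le]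
            ring
    · intro p hp
      simp [coverSet, hp, hs]
  · simp [coverSet, hq, hs]

lemma hausdorffMeasure_bounded_approx_eq_zero (Q : Set ℕ) (hQpos : ∀ q ∈ Q, 0 < q)
    (n k : ℕ) {τ s : ℝ} (hτ : 0 < τ) (hs : 0 < s) (h : expConv Q < τ * s - n) :
    μH[s] {x : Fin n → ℝ | ‖x‖ ≤ k ∧ (approxPairs n τ Q x).Infinite} = 0 := by
  set g : ℕ → ENNReal := fun q => ENNReal.ofReal (((2 * k + 3) ^ n * 2 ^ s) *
        Q.indicator (fun q : ℕ => (q : ℝ) ^ (-(τ * s - n))) q) with hg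
  have hgsum : ∑' q, g q ≠ ∞ :=
    ((summable_of_expConv_lt Q hQpos h).mul_left _).tsum_ofReal_ne_top
  have htail : Tendsto (fun N : ℕ => ∑' j, g (j + N)) atTop (nhds 0) :=
    ENNReal.tendsto_sum_nat_add g hgsum
  have hr : Tendsto (fun N : ℕ => ENNReal.ofReal (2 * (N : ℝ) ^ (-τ))) atTop (nhds 0) := by
    have := ((tendsto_rpow_neg_atTop hτ).comp tendsto_natCast_atTop_atTop).const_mul (2 : ℝ)
    simpa using ENNReal.tendsto_ofReal this
  have key := Measure.hausdorffMeasure_le_liminf_tsum (ι := fun _ : ℕ => ℕ × (Fin n → ℤ)) s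
    {x : Fin n → ℝ | ‖x‖ ≤ k ∧ (approxPairs n τ Q x).Infinite} _ hr
    (fun N (jp : ℕ × (Fin n → ℤ)) => coverSet n k τ Q (jp.1 + N) jp.2) ?_ ?_
  · refine le_antisymm (key.trans ?_) bot_le
    rw [← htail.liminf_eq]
    refine liminf_le_liminf (Eventually.of_forall fun N => ?_)
    rw [ENNReal.tsum_prod']
    exact ENNReal.tsum_le_tsum fun j => tsum_ediam_coverSet_le n k hs Q hQpos (j + N)
  · filter_upwards [eventually_ge_atTop 1] with N hN jp
    refine (ediam_coverSet_le n k τ Q _ _).trans (ENNReal.ofReal_le_ofReal ?_)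
    have hN' : (0 : ℝ) < N := by exact_mod_cast hN
    have : ((jp.1 + N : ℕ) : ℝ) ^ (-τ) ≤ (N : ℝ) ^ (-τ) :=
      Real.rpow_le_rpow_of_nonpos hN' (by push_cast; linarith [(jp.1.cast_nonneg : (0:ℝ) ≤ _)])
        (by linarith)
    linarith
  · refine Eventually.of_forall fun N x hx => ?_
    obtain ⟨hxk, hinf⟩ := hx
    -- Only finitely many approximating pairs have denominator below `N`.
    obtain ⟨⟨p, q⟩, hpq, hnot⟩ := hinf.exists_notMem_finset
      ((Finset.range N).biUnion fun q => (numerators n k q).image fun p => (p, q))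
    have hp := mem_numerators hτ hQpos hxk hpq
    have hqN : N ≤ q := by
      by_contra! hlt
      exact hnot (Finset.mem_biUnion.2 ⟨q, Finset.mem_range.2 hlt,
        Finset.mem_image.2 ⟨p, hp, rfl⟩⟩)
    refine Set.mem_iUnion.2 ⟨(q - N, p), ?_⟩
    simp only [Nat.sub_add_cancel hqN]
    unfold coverSet
    rw [if_pos ⟨hpq.1, hp⟩, Metric.mem_closedBall, dist_eq_norm]
    exact hpq.2.le

theorem hausdorffMeasure_WStar_inter_unitCube_eq_zero
    (Q : Set ℕ) (hQpos : ∀ q ∈ Q, 0 < q) (hQinf : Q.Infinite)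
    (n : ℕ) (hn : 1 ≤ n) (τ : ℝ) (hτ : 1 + expConv Q / (n : ℝ) < τ) :
    (∀ s : ℝ, (n + expConv Q) / τ < s →
      μH[s] (WStar n τ Q ∩ Set.univ.pi fun _ : Fin n => Set.Icc (0 : ℝ) 1) = 0) ∧
    dimH (WStar n τ Q) ≤ ENNReal.ofReal ((n + expConv Q) / τ) := by
  have hν := expConv_nonneg Q
  have hτ0 : 0 < τ := by
    have : 0 ≤ expConv Q / (n : ℝ) := by positivity
    linarith
  have hn0 : (0 : ℝ) < n := by exact_mod_cast hn
  have main : ∀ s : ℝ, (n + expConv Q) / τ < s → ∀ k : ℕ,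
      μH[s] {x : Fin n → ℝ | ‖x‖ ≤ k ∧ (approxPairs n τ Q x).Infinite} = 0 := by
    intro s hs k
    have hs0 : 0 < s := lt_of_le_of_lt (by positivity) hs
    rw [div_lt_iff₀ hτ0] at hs
    exact hausdorffMeasure_bounded_approx_eq_zero Q hQpos n k hτ0 hs0 (by linarith)
  refine ⟨fun s hs => measure_mono_null ?_ (main s hs 1), dimH_le fun d hd => ?_⟩
  · rintro x ⟨hx, hbox⟩
    refine ⟨(pi_norm_le_iff_of_nonneg (by simp)).2 fun i => ?_, hx.1⟩
    have := hbox i trivial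
    rw [Real.norm_eq_abs, abs_of_nonneg this.1]
    simpa using this.2
  · by_contra! hlt
    have hd' : (n + expConv Q) / τ < d := by
      rwa [← ENNReal.ofReal_coe_nnreal, ENNReal.ofReal_lt_ofReal_iff_of_nonneg
        (by positivity)] at hlt
    have : μH[(d : ℝ)] (WStar n τ Q) = 0 := by
      refine measure_mono_null (fun x hx => ?_) (measure_iUnion_null (main d hd'))
      obtain ⟨k, hk⟩ := exists_nat_ge ‖x‖
      exact Set.mem_iUnion.2 ⟨k, hk, hx.1⟩
    simp [this] at hd
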